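/- arXiv:1704.05792 — 3 statements merged into one kernel-verified Lean document; each statement's English description precedes it below -/
import Mathlib

section
/- Theorem 4.1(d): If a locally finite partially ordered set satisfies Axiom VT and has Property SS, then it satisfies Axiom D3⁻C. -/
namespace DCompleteStmt

variable {α : Type*}

/-- A vee (d₃⁻-set) `{w; x, y}`: three distinct elements with `w ⋖ x` and `w ⋖ y`. -/
def IsVee [PartialOrder α] (w x y : α) : Prop :=
  x ≠ y ∧ w ⋖ x ∧ w ⋖ y

/-- A diamond `{w; x, y; z}`: four distinct elements with
`w ⋖ x`, `w ⋖ y`, `x ⋖ z`, `y ⋖ z`. -/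
def IsDiamond [PartialOrder α] (w x y z : α) : Prop :=
  x ≠ y ∧ w ⋖ x ∧ w ⋖ y ∧ x ⋖ z ∧ y ⋖ z

/-- A d₃-interval: an interval `[w,z]` that as a set equals a diamond `{w; x, y; z}`. -/
def IsD3Interval [PartialOrder α] (w x y z : α) : Prop :=
  IsDiamond w x y z ∧ Set.Icc w z = {w, x, y, z}

/-- Axiom VT: every vee has a top. -/
def AxVT (α : Type*) [PartialOrder α] : Prop :=
  ∀ w x y : α, IsVee w x y → ∃ z : α, x ⋖ z ∧ y ⋖ z

/-- Axiom NCC: there are no overlapping vees. -/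
def AxNCC (α : Type*) [PartialOrder α] : Prop :=
  ¬ ∃ w w' x y : α, w ≠ w' ∧ x ≠ y ∧ w ⋖ x ∧ w ⋖ y ∧ w' ⋖ x ∧ w' ⋖ y

/-- Property UT: every vee has exactly one top. -/
def PropUT (α : Type*) [PartialOrder α] : Prop :=
  ∀ w x y : α, IsVee w x y → ∃! z : α, x ⋖ z ∧ y ⋖ z

/-- Axiom D3⁻C: every vee has a completing element. -/
def AxD3C (α : Type*) [PartialOrder α] : Prop :=
  ∀ w x y : α, IsVee w x y → ∃ z : α, IsD3Interval w x y z

/-- Property NTC: no element is covered by three pairwise distinct elements. -/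
def PropNTC (α : Type*) [PartialOrder α] : Prop :=
  ¬ ∃ w x y u : α, x ≠ y ∧ x ≠ u ∧ y ≠ u ∧ w ⋖ x ∧ w ⋖ y ∧ w ⋖ u

/-- Property SS: every short interval has cardinality 3 or 4. -/
def PropSS (α : Type*) [PartialOrder α] : Prop :=
  ∀ w u z : α, w ⋖ u → u ⋖ z →
    (Set.Icc w z).ncard = 3 ∨ (Set.Icc w z).ncard = 4

/-- Axiom FT: the top of every diamond covers only the elbows of the diamond. -/
def AxFT (α : Type*) [PartialOrder α] : Prop :=
  ∀ w x y z : α, IsDiamond w x y z → ∀ u : α, u ⋖ z → u = x ∨ u = y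

/-- Axiom D3MF: the maximum of every d₃-interval covers only the elbows. -/
def AxD3MF (α : Type*) [PartialOrder α] : Prop :=
  ∀ w x y z : α, IsD3Interval w x y z → ∀ u : α, u ⋖ z → u = x ∨ u = y

/-- Axiom D3MD: two d₃-intervals with the same maximum element coincide as sets. -/
def AxD3MD (α : Type*) [PartialOrder α] : Prop :=
  ∀ w x y z w' x' y' : α, IsD3Interval w x y z → IsD3Interval w' x' y' z →
    ({w, x, y, z} : Set α) = {w', x', y', z}

/-- Axiom D3⁻CF: every vee has a completing element covering only the elbows. -/
def AxD3CF (α : Type*) [PartialOrder α] : Prop :=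
  ∀ w x y : α, IsVee w x y →
    ∃ z : α, IsD3Interval w x y z ∧ ∀ u : α, u ⋖ z → u = x ∨ u = y

/-- Property DAI: every diamond is an interval. -/
def PropDAI (α : Type*) [PartialOrder α] : Prop :=
  ∀ w x y z : α, IsDiamond w x y z → Set.Icc w z = {w, x, y, z}

/-- Property UC3: every vee has exactly one completing element. -/
def PropUC3 (α : Type*) [PartialOrder α] : Prop :=
  ∀ w x y : α, IsVee w x y → ∃! z : α, IsD3Interval w x y z

/-- Property UPUE: upward propagation of up edges. -/
def PropUPUE (α : Type*) [PartialOrder α] : Prop :=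
  ∀ w x y : α, w ≤ y → w ⋖ x → ¬ x ≤ y → ∃ z : α, y ⋖ z ∧ x ≤ z

/-- A covering chain `a = f 0 ⋖ f 1 ⋖ ⋯ ⋖ f n = b` of length `n`. -/
def IsCovChain [PartialOrder α] (f : ℕ → α) (n : ℕ) (a b : α) : Prop :=
  f 0 = a ∧ f n = b ∧ ∀ i < n, f i ⋖ f (i + 1)

/-- Connectedness via the Hasse diagram (covering graph). -/
def HasseConnected (α : Type*) [PartialOrder α] : Prop :=
  ∀ a b : α, Relation.ReflTransGen (fun u v : α => u ⋖ v ∨ v ⋖ u) a b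

/-- Property UM: a unique maximal element. -/
def PropUM (α : Type*) [PartialOrder α] : Prop :=
  ∃! z : α, IsMax z

/-- Property CLMEE: a unique maximal element, and all covering chains from any
element to it have equal length. -/
def PropCLMEE (α : Type*) [PartialOrder α] : Prop :=
  ∃ z : α, IsMax z ∧ (∀ z' : α, IsMax z' → z' = z) ∧
    ∀ (w : α) (n m : ℕ) (f g : ℕ → α),
      IsCovChain f n w z → IsCovChain g m w z → n = m

/-- The poset is ranked. -/
def IsRanked (α : Type*) [PartialOrder α] : Prop :=
  ∃ ρ : α → ℤ, ∀ x y : α, x ⋖ y → ρ y = ρ x + 1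

/-- Property CLE: whenever `x < y`, all covering chains from `x` to `y`
have equal length. -/
def PropCLE (α : Type*) [PartialOrder α] : Prop :=
  ∀ x y : α, x < y → ∀ (n m : ℕ) (f g : ℕ → α),
    IsCovChain f n x y → IsCovChain g m x y → n = m

section PartialOrder

variable [PartialOrder α] {w x y z u : α}

theorem IsDiamond.bot_lt_top (h : IsDiamond w x y z) : w < z := by
  obtain ⟨-, hwx, -, hxz, -⟩ := h
  exact hwx.lt.trans hxz.lt

theorem IsDiamond.subset_Icc (h : IsDiamond w x y z) : {w, x, y, z} ⊆ Set.Icc w z := by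
  have hwz : w < z := h.bot_lt_top
  obtain ⟨-, hwx, hwy, hxz, hyz⟩ := h
  rintro u (rfl | rfl | rfl | rfl)
  · exact ⟨le_rfl, hwz.le⟩
  · exact ⟨hwx.le, hxz.le⟩
  · exact ⟨hwy.le, hyz.le⟩
  · exact ⟨hwz.le, le_rfl⟩

theorem IsDiamond.ncard_eq_four (h : IsDiamond w x y z) : ({w, x, y, z} : Set α).ncard = 4 := by
  have hwz : w < z := h.bot_lt_top
  obtain ⟨hxy, hwx, hwy, hxz, hyz⟩ := h
  have hw : w ∉ ({x, y, z} : Set α) := by simp [hwx.ne, hwy.ne, hwz.ne]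
  have hx : x ∉ ({y, z} : Set α) := by simp [hxy, hxz.ne]
  rw [Set.ncard_insert_of_notMem hw, Set.ncard_insert_of_notMem hx, Set.ncard_pair hyz.ne]

theorem IsDiamond.Icc_eq_of_ncard_le_four (h : IsDiamond w x y z)
    (hfin : (Set.Icc w z).Finite) (hcard : (Set.Icc w z).ncard ≤ 4) :
    Set.Icc w z = {w, x, y, z} :=
  (Set.eq_of_subset_of_ncard_le h.subset_Icc (hcard.trans_eq h.ncard_eq_four.symm) hfin).symm

-- Infinite sets have `ncard` equal to `0`, so the cardinalities allowed by SS force finiteness.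
theorem PropSS.finite_Icc (hSS : PropSS α) (hwu : w ⋖ u) (huz : u ⋖ z) : (Set.Icc w z).Finite :=
  Set.finite_of_ncard_pos (by have hcard := hSS w u z hwu huz; lia)

theorem PropSS.ncard_Icc_le_four (hSS : PropSS α) (hwu : w ⋖ u) (huz : u ⋖ z) :
    (Set.Icc w z).ncard ≤ 4 := by
  have hcard := hSS w u z hwu huz
  lia

theorem PropSS.propDAI (hSS : PropSS α) : PropDAI α := by
  intro w x y z h
  have ⟨_, hwx, _, hxz, _⟩ := h
  exact h.Icc_eq_of_ncard_le_four (hSS.finite_Icc hwx hxz) (hSS.ncard_Icc_le_four hwx hxz)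

theorem AxVT.exists_isDiamond (hVT : AxVT α) (h : IsVee w x y) : ∃ z, IsDiamond w x y z := by
  obtain ⟨z, hxz, hyz⟩ := hVT w x y h
  obtain ⟨hxy, hwx, hwy⟩ := h
  exact ⟨z, hxy, hwx, hwy, hxz, hyz⟩

theorem AxVT.axD3C_of_propDAI (hVT : AxVT α) (hDAI : PropDAI α) : AxD3C α := by
  intro w x y hvee
  obtain ⟨z, hdiamond⟩ := hVT.exists_isDiamond hvee
  exact ⟨z, hdiamond, hDAI w x y z hdiamond⟩

theorem stmt_2_general (hVT : AxVT α) (hSS : PropSS α) : AxD3C α :=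
  hVT.axD3C_of_propDAI hSS.propDAI

end PartialOrder

/-- Theorem 4.1(d): VT and SS imply D3⁻C. -/
theorem stmt_2 {α : Type*} [PartialOrder α] (hLF : ∀ a b : α, (Set.Icc a b).Finite)
    (hVT : AxVT α) (hSS : PropSS α) : AxD3C α :=
  stmt_2_general hVT hSS

end DCompleteStmt
end

section
/- Theorem 4.1(g): If a locally finite partially ordered set satisfies Axiom D3⁻C and Axiom NCC, then it has Property UT, Property DAI, and Property UC3. -/
namespace DCompleteStmt

variable {α : Type*}

section

variable [PartialOrder α] {w x y z z' : α}

theorem IsDiamond.isVee (h : IsDiamond w x y z) : IsVee w x y :=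
  ⟨h.1, h.2.1, h.2.2.1⟩

theorem IsDiamond.covBy_top (h : IsDiamond w x y z) : x ⋖ z ∧ y ⋖ z :=
  h.2.2.2

-- Two common covers `z ≠ z'` of `x` and `y` would be the elbows of overlapping vees with
-- bottoms `x` and `y`.
theorem AxNCC.eq_of_covBy (hNCC : AxNCC α) (hxy : x ≠ y) (hz : x ⋖ z ∧ y ⋖ z)
    (hz' : x ⋖ z' ∧ y ⋖ z') : z = z' := by
  by_contra hne
  exact hNCC ⟨x, y, z, z', hxy, hne, hz.1, hz'.1, hz.2, hz'.2⟩

theorem AxD3C.axVT (hD3C : AxD3C α) : AxVT α := fun w x y hvee ↦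
  let ⟨z, hz⟩ := hD3C w x y hvee
  ⟨z, hz.1.covBy_top⟩

theorem AxVT.propUT (hVT : AxVT α) (hNCC : AxNCC α) : PropUT α := fun w x y hvee ↦
  existsUnique_of_exists_of_unique (hVT w x y hvee) fun _ _ ↦ hNCC.eq_of_covBy hvee.1

theorem PropUT.propDAI (hUT : PropUT α) (hD3C : AxD3C α) : PropDAI α := by
  intro w x y z hdiamond
  obtain ⟨z', hz'⟩ := hD3C w x y hdiamond.isVee
  have hzz' : z = z' :=
    (hUT w x y hdiamond.isVee).unique hdiamond.covBy_top hz'.1.covBy_top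
  exact hzz' ▸ hz'.2

theorem PropUT.propUC3 (hUT : PropUT α) (hD3C : AxD3C α) : PropUC3 α := fun w x y hvee ↦
  existsUnique_of_exists_of_unique (hD3C w x y hvee) fun _ _ hz hz' ↦
    (hUT w x y hvee).unique hz.1.covBy_top hz'.1.covBy_top

end

theorem stmt_5_general {α : Type*} [PartialOrder α] (hD3C : AxD3C α) (hNCC : AxNCC α) :
    PropUT α ∧ PropDAI α ∧ PropUC3 α := by
  have hUT : PropUT α := hD3C.axVT.propUT hNCC
  exact ⟨hUT, hUT.propDAI hD3C, hUT.propUC3 hD3C⟩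

/-- Theorem 4.1(g): D3⁻C and NCC imply UT, DAI, and UC3. -/
theorem stmt_5 {α : Type*} [PartialOrder α] (hLF : ∀ a b : α, (Set.Icc a b).Finite)
    (hD3C : AxD3C α) (hNCC : AxNCC α) : PropUT α ∧ PropDAI α ∧ PropUC3 α :=
  stmt_5_general hD3C hNCC

end DCompleteStmt
end

section
/- Theorem 4.3(a): If a finite connected partially ordered set satisfies Axiom VT, then it has Property UM and Property CLMEE. -/
/-!
Axiom VT is a one-step diamond property of the covering relation, so the Church–Rosser theorem
applies to it: in a connected poset any two elements are joined from above by covering chains. An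
element without covers is therefore reached by a covering chain from every element, and is the
greatest one. Two covering chains from `w` up to it that begin with distinct covers `x`, `y` of `w`
are compared by continuing from a common cover of `x` and `y`.
-/

namespace DCompleteStmt

variable {α : Type*}

section CoveringChains

variable [PartialOrder α] {f : ℕ → α} {n : ℕ} {a b c : α}

theorem IsCovChain.eq_of_length_zero (h : IsCovChain f 0 a b) : a = b :=
  h.1.symm.trans h.2.1

theorem IsCovChain.exists_cons (hab : a ⋖ b) (h : IsCovChain f n b c) :
    ∃ g, IsCovChain g (n + 1) a c := by
  obtain ⟨rfl, hc, hcov⟩ := h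
  refine ⟨fun k => Nat.casesOn k a f, rfl, hc, fun i hi => ?_⟩
  cases i with
  | zero => exact hab
  | succ k => exact hcov k (Nat.lt_of_succ_lt_succ hi)

theorem IsCovChain.exists_covBy_tail (h : IsCovChain f (n + 1) a c) :
    ∃ b, a ⋖ b ∧ ∃ g, IsCovChain g n b c := by
  obtain ⟨ha, hc, hcov⟩ := h
  exact ⟨f 1, ha ▸ hcov 0 n.succ_pos, fun k => f (k + 1), rfl, hc,
    fun i hi => hcov (i + 1) (Nat.succ_lt_succ hi)⟩

theorem IsCovChain.length_eq_zero (h : IsCovChain f n a b) (ha : ∀ y, ¬a ⋖ y) : n = 0 := by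
  cases n with
  | zero => rfl
  | succ n =>
    obtain ⟨x, hax, -⟩ := h.exists_covBy_tail
    exact absurd hax (ha x)

theorem reflTransGen_covBy_iff_exists_isCovChain :
    Relation.ReflTransGen (· ⋖ ·) a b ↔ ∃ n f, IsCovChain f n a b := by
  constructor
  · intro h
    induction h using Relation.ReflTransGen.head_induction_on with
    | refl => exact ⟨0, fun _ => b, rfl, rfl, fun _ hi => absurd hi (Nat.not_lt_zero _)⟩
    | head hab _ ih =>
      obtain ⟨n, f, hf⟩ := ih
      exact ⟨n + 1, hf.exists_cons hab⟩
  · rintro ⟨n, f, hf⟩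
    induction n generalizing a f with
    | zero => rw [hf.eq_of_length_zero]
    | succ n ih =>
      obtain ⟨x, hax, g, hg⟩ := hf.exists_covBy_tail
      exact .head hax (ih g hg)

theorem le_of_reflTransGen_covBy (h : Relation.ReflTransGen (· ⋖ ·) a b) : a ≤ b := by
  induction h with
  | refl => exact le_rfl
  | tail _ hbc ih => exact ih.trans hbc.le

end CoveringChains

namespace AxVT

open Relation

variable [PartialOrder α] {w x y z : α}

theorem exists_reflGen_reflTransGen_covBy (hVT : AxVT α) (w x y : α) (hx : w ⋖ x) (hy : w ⋖ y) :
    ∃ u, ReflGen (· ⋖ ·) x u ∧ ReflTransGen (· ⋖ ·) y u := by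
  by_cases hxy : x = y
  · exact ⟨x, .refl, hxy ▸ .refl⟩
  · obtain ⟨u, hxu, hyu⟩ := hVT w x y ⟨hxy, hx, hy⟩
    exact ⟨u, .single hxu, .single hyu⟩

theorem join_of_hasseConnected (hVT : AxVT α) (hConn : HasseConnected α) (x y : α) :
    Join (ReflTransGen (· ⋖ ·)) x y := by
  have hEquiv := equivalence_join_reflTransGen hVT.exists_reflGen_reflTransGen_covBy
  induction hConn x y with
  | refl => exact hEquiv.refl x
  | tail _ hbc ih =>
    refine hEquiv.trans ih ?_
    rcases hbc with hbc | hcb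
    · exact ⟨_, .single hbc, .refl⟩
    · exact ⟨_, .refl, .single hcb⟩

theorem isTop_of_forall_not_covBy (hVT : AxVT α) (hConn : HasseConnected α)
    (hz : ∀ y, ¬z ⋖ y) : IsTop z := by
  intro w
  obtain ⟨u, hwu, hzu⟩ := hVT.join_of_hasseConnected hConn w z
  obtain rfl : u = z := (reflTransGen_iff_eq hz).mp hzu
  exact le_of_reflTransGen_covBy hwu

theorem reflTransGen_covBy_of_forall_not_covBy (hVT : AxVT α) (hz : ∀ y, ¬z ⋖ y)
    (hwz : ReflTransGen (· ⋖ ·) w z) (hwx : ReflTransGen (· ⋖ ·) w x) :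
    ReflTransGen (· ⋖ ·) x z := by
  obtain ⟨u, hzu, hxu⟩ := church_rosser hVT.exists_reflGen_reflTransGen_covBy hwz hwx
  rwa [(reflTransGen_iff_eq hz).mp hzu] at hxu

theorem exists_common_length_isCovChain (hVT : AxVT α) (hz : ∀ y, ¬z ⋖ y) (hx : w ⋖ x)
    (hy : w ⋖ y) (hxy : x ≠ y) (hxz : ReflTransGen (· ⋖ ·) x z) :
    ∃ k, (∃ f, IsCovChain f k x z) ∧ ∃ g, IsCovChain g k y z := by
  obtain ⟨u, hxu, hyu⟩ := hVT w x y ⟨hxy, hx, hy⟩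
  obtain ⟨k, g, hg⟩ := reflTransGen_covBy_iff_exists_isCovChain.mp
    (hVT.reflTransGen_covBy_of_forall_not_covBy hz hxz (.single hxu))
  exact ⟨k + 1, hg.exists_cons hxu, hg.exists_cons hyu⟩

theorem isCovChain_length_unique (hVT : AxVT α) (hz : ∀ y, ¬z ⋖ y) {n m : ℕ} {f g : ℕ → α}
    (hf : IsCovChain f n w z) (hg : IsCovChain g m w z) : n = m := by
  induction n generalizing w m f g with
  | zero =>
    obtain rfl := hf.eq_of_length_zero
    exact (hg.length_eq_zero hz).symm
  | succ n ih =>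
    cases m with
    | zero =>
      obtain rfl := hg.eq_of_length_zero
      exact hf.length_eq_zero hz
    | succ m =>
      obtain ⟨x, hwx, f', hf'⟩ := hf.exists_covBy_tail
      obtain ⟨y, hwy, g', hg'⟩ := hg.exists_covBy_tail
      congr 1
      by_cases hxy : x = y
      · subst hxy
        exact ih hf' hg'
      · have hxz := reflTransGen_covBy_iff_exists_isCovChain.mpr ⟨n, f', hf'⟩
        obtain ⟨k, ⟨p, hp⟩, q, hq⟩ := hVT.exists_common_length_isCovChain hz hwx hwy hxy hxz
        obtain rfl : n = k := ih hf' hp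
        exact ih hq hg'

end AxVT

theorem stmt_14_general {α : Type*} [PartialOrder α] {z : α} (hz : ∀ y, ¬z ⋖ y)
    (hConn : HasseConnected α) (hVT : AxVT α) : PropUM α ∧ PropCLMEE α := by
  have hTop : IsTop z := hVT.isTop_of_forall_not_covBy hConn hz
  have hUnique : ∀ z', IsMax z' → z' = z := fun z' hz' => hz'.eq_of_le (hTop z')
  exact ⟨⟨z, hTop.isMax, hUnique⟩, z, hTop.isMax, hUnique,
    fun _ _ _ _ _ hf hg => hVT.isCovChain_length_unique hz hf hg⟩

/-- Theorem 4.3(a): a finite connected VT poset has UM and CLMEE. -/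
theorem stmt_14 {α : Type*} [PartialOrder α] [Fintype α] [Nonempty α]
    (hConn : HasseConnected α) (hVT : AxVT α) : PropUM α ∧ PropCLMEE α := by
  obtain ⟨z, hz⟩ := Set.finite_univ.exists_maximal (Set.univ_nonempty (α := α))
  exact stmt_14_general (fun _ hzy => hzy.lt.not_ge (hz.2 trivial hzy.le)) hConn hVT

end DCompleteStmt
end
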